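/- Let 0 < κ < 1, w ≠ 0, 0 < β < 1, α > 1, γ ≥ 0, μ > 0 and t > 0. Assume 1/(1+Γ(1−β)u) ≤ E_β(−u) ≤ 1/(1+u/Γ(1+β)) for u ≥ 0 and that u ↦ E_β(−u) is nonincreasing on [0,∞). Then lim_{ε→0⁺} ∫_ℝ ( E_β(−μ|λ|^α(1+λ²ε^{2β/α})^{γ/2} t^β)·√(f_{κ,w}(λ ε^{β/α})) − E_β(−μ t^β|λ|^α)·√(f_{κ,w}(0)) )² dλ = 0. (The mean-square convergence at the core of Theorem 4: it expresses E|U_ε(t,x) − U₀(t,x)|² → 0 for the rescaled solutions U_ε(t,x) = ε^{−β/(2α)} u(t/ε, x/ε^{β/α}) of the fractional Riesz-Bessel equation ∂^β_t u = −μ(I−Δ)^{α/2}(−Δ)^{γ/2}u with stationary Gaussian initial condition having spectral density f_{κ,w}.) -/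

import Mathlib

open Real MeasureTheory Filter

noncomputable def c1 (k : ℝ) : ℝ := (2:ℝ) ^ ((1 - k)/2) / (Real.sqrt π * Real.Gamma (k/2))

noncomputable def c2 (k : ℝ) : ℝ := 1 / (2 * Real.Gamma k * Real.cos (k * π / 2))

/-- Modified Bessel function of the second kind:
`K ν z = (1/2) ∫₀^∞ s^(ν−1) exp(−(z/2)(s + 1/s)) ds`. -/
noncomputable def besselK (ν z : ℝ) : ℝ :=
  (1/2) * ∫ s in Set.Ioi (0:ℝ), s ^ (ν - 1) * Real.exp (-(z/2) * (s + 1/s))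

/-- The spectral density `f_{κ,w}` of the covariance `cos(wx)/(1+x²)^{κ/2}`. -/
noncomputable def specDen (k w lam : ℝ) : ℝ :=
  (c1 k / 2) * (besselK ((k-1)/2) |lam + w| * |lam + w| ^ ((k-1)/2)
    + besselK ((k-1)/2) |lam - w| * |lam - w| ^ ((k-1)/2))

/-- The Mittag-Leffler function `E_β(z) = Σ_{k≥0} z^k / Γ(βk+1)` (real argument). -/
noncomputable def mittagLeffler (b z : ℝ) : ℝ := ∑' k : ℕ, z ^ k / Real.Gamma (b * k + 1)

/-!
The function `K_ν(|x|) |x|^ν` is a mixture of centred Gaussians, so for `κ > 0` the spectral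
density `f` is integrable and is continuous away from `±w`; in particular `√f` is square integrable
and continuous at `0`. Since `E_b(-u) = O(1/(1 + u))`, the Fourier multipliers at all scales `δ`
share the envelope `p(x) = D (1 + |x|)^(-α)`, and the integrand is at most
`2 p(x)² (f(δx) + f(0))`. As `f` may be unbounded near `±w`, no integrable function need dominate
these majorants uniformly in `δ`, but their integrals converge: `p²` is integrable and `o(1/|x|)`,
so its dilations form an approximate identity. Dominated convergence in the form of Pratt then
gives the limit.
-/

open scoped Topology

section DilationLimits

lemma tendsto_integral_zero_of_le_of_tendsto_integral {X ι : Type*} [MeasurableSpace X]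
    {μ : Measure X} {l : Filter ι} [l.IsCountablyGenerated] {F H : ι → X → ℝ} {H₀ : X → ℝ}
    (hF_meas : ∀ᶠ i in l, AEStronglyMeasurable (F i) μ)
    (hH_int : ∀ᶠ i in l, Integrable (H i) μ) (hH₀_int : Integrable H₀ μ)
    (hF_nonneg : ∀ i x, 0 ≤ F i x) (hFH : ∀ i x, F i x ≤ H i x)
    (hF_lim : ∀ x, Tendsto (F · x) l (𝓝 0)) (hH_lim : ∀ x, Tendsto (H · x) l (𝓝 (H₀ x)))
    (hH_integral : Tendsto (fun i ↦ ∫ x, H i x ∂μ) l (𝓝 (∫ x, H₀ x ∂μ))) :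
    Tendsto (fun i ↦ ∫ x, F i x ∂μ) l (𝓝 0) := by
  -- The truncation `(F - (H - H₀))⁺` is dominated by `|H₀|`, although `F` itself need not be.
  let T : ι → X → ℝ := fun i x ↦ max (F i x - (H i x - H₀ x)) 0
  have hT_meas : ∀ᶠ i in l, AEStronglyMeasurable (T i) μ := by
    filter_upwards [hF_meas, hH_int] with i hFi hHi
    exact (hFi.sub (hHi.sub hH₀_int).aestronglyMeasurable).sup aestronglyMeasurable_const
  have hT_le (i : ι) (x : X) : ‖T i x‖ ≤ |H₀ x| := by
    rw [Real.norm_of_nonneg (le_max_right _ _)]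
    exact max_le (by linarith [hFH i x, le_abs_self (H₀ x)]) (abs_nonneg _)
  have hT_lim (x : X) : Tendsto (T · x) l (𝓝 0) := by
    simpa [T] using ((hF_lim x).sub ((hH_lim x).sub_const (H₀ x))).max (tendsto_const_nhds (x := 0))
  have hT_integral : Tendsto (fun i ↦ ∫ x, T i x ∂μ) l (𝓝 0) := by
    simpa using tendsto_integral_filter_of_dominated_convergence (fun x ↦ |H₀ x|) hT_meas
      (.of_forall fun i ↦ .of_forall (hT_le i)) hH₀_int.abs (.of_forall hT_lim)
  refine squeeze_zero' (.of_forall fun i ↦ integral_nonneg (hF_nonneg i)) ?_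
    (by simpa using hT_integral.add (hH_integral.sub_const (∫ x, H₀ x ∂μ)))
  filter_upwards [hT_meas, hH_int] with i hTi hHi
  have hdiff_int : Integrable (fun x ↦ H i x - H₀ x) μ := hHi.sub hH₀_int
  have hTi_int : Integrable (T i) μ := hH₀_int.abs.mono' hTi (.of_forall (hT_le i))
  rw [← integral_sub hHi hH₀_int, ← integral_add hTi_int hdiff_int]
  refine integral_mono_of_nonneg (.of_forall (hF_nonneg i)) (hTi_int.add hdiff_int)
    (.of_forall fun x ↦ ?_)
  linarith [le_max_left (F i x - (H i x - H₀ x)) 0]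

lemma tendsto_norm_pow_mul_one_add_norm_rpow_neg {E : Type*} [NormedAddCommGroup E] {n : ℕ}
    {r : ℝ} (hr : n < r) :
    Tendsto (fun x : E ↦ ‖x‖ ^ n * (1 + ‖x‖) ^ (-r)) (Bornology.cobounded E) (𝓝 0) := by
  have hdecay : Tendsto (fun x : E ↦ (1 + ‖x‖) ^ (-(r - n))) (Bornology.cobounded E) (𝓝 0) :=
    (tendsto_rpow_neg_atTop (sub_pos.2 hr)).comp
      (tendsto_atTop_add_const_left _ 1 tendsto_norm_cobounded_atTop)
  refine squeeze_zero (fun x ↦ by positivity) (fun x ↦ ?_) hdecay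
  have hx : 0 < 1 + ‖x‖ := by positivity
  calc ‖x‖ ^ n * (1 + ‖x‖) ^ (-r) ≤ (1 + ‖x‖) ^ n * (1 + ‖x‖) ^ (-r) := by
        gcongr
        linarith
    _ = (1 + ‖x‖) ^ (-(r - n)) := by
        rw [← Real.rpow_natCast, ← Real.rpow_add hx]
        ring_nf

lemma one_add_norm_rpow_neg_le_one {E : Type*} [NormedAddCommGroup E] {r : ℝ} (hr : 0 ≤ r)
    (x : E) : (1 + ‖x‖) ^ (-r) ≤ 1 :=
  Real.rpow_le_one_of_one_le_of_nonpos (by simp) (by simpa)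

lemma sq_mul_one_add_norm_rpow_neg {E : Type*} [NormedAddCommGroup E] (D α : ℝ) (x : E) :
    (D * (1 + ‖x‖) ^ (-α)) ^ 2 = D ^ 2 * (1 + ‖x‖) ^ (-(2 * α)) := by
  rw [mul_pow, mul_comm 2 α, ← neg_mul, Real.rpow_mul (by positivity), Real.rpow_ofNat]

lemma sq_mul_sub_mul_le {y y₀ a a₀ p : ℝ} (hy : |y| ≤ p) (hy₀ : |y₀| ≤ p) :
    (y * a - y₀ * a₀) ^ 2 ≤ 2 * (p ^ 2 * a ^ 2 + p ^ 2 * a₀ ^ 2) := by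
  have hy_sq : y ^ 2 ≤ p ^ 2 := sq_le_sq.2 (hy.trans (le_abs_self p))
  have hy₀_sq : y₀ ^ 2 ≤ p ^ 2 := sq_le_sq.2 (hy₀.trans (le_abs_self p))
  calc (y * a - y₀ * a₀) ^ 2 ≤ 2 * (y ^ 2 * a ^ 2 + y₀ ^ 2 * a₀ ^ 2) := by
        linarith [sq_nonneg (y * a + y₀ * a₀)]
    _ ≤ 2 * (p ^ 2 * a ^ 2 + p ^ 2 * a₀ ^ 2) := by gcongr

variable {E : Type*} [NormedAddCommGroup E] [NormedSpace ℝ E] [FiniteDimensional ℝ E]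
  [MeasurableSpace E] [BorelSpace E] {μ : Measure E} [μ.IsAddHaarMeasure]

lemma tendsto_integral_mul_comp_smul {φ f : E → ℝ} (hφ_nonneg : ∀ x, 0 ≤ φ x)
    (hφ : Integrable φ μ)
    (hφ_decay : Tendsto (fun x ↦ ‖x‖ ^ Module.finrank ℝ E * φ x) (Bornology.cobounded E) (𝓝 0))
    (hf : Integrable f μ) (hf_cont : ContinuousAt f 0) :
    Tendsto (fun d : ℝ ↦ ∫ x, φ x * f (d • x) ∂μ) (𝓝[>] 0) (𝓝 ((∫ x, φ x ∂μ) * f 0)) := by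
  rcases eq_or_ne (∫ x, φ x ∂μ) 0 with hI | hI
  · have hφ_zero : φ =ᵐ[μ] 0 := (integral_eq_zero_iff_of_nonneg hφ_nonneg hφ).1 hI
    have hzero (d : ℝ) : ∫ x, φ x * f (d • x) ∂μ = 0 :=
      integral_eq_zero_of_ae <| hφ_zero.mono fun x hx ↦ by simp [hx]
    simp [hI, hzero]
  set I := ∫ x, φ x ∂μ
  have hpeak := tendsto_integral_comp_smul_smul_of_integrable (μ := μ) (φ := fun x ↦ I⁻¹ * φ x)
    (fun x ↦ mul_nonneg (inv_nonneg.2 (integral_nonneg hφ_nonneg)) (hφ_nonneg x))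
    (by rw [integral_const_mul, inv_mul_cancel₀ hI])
    (by simpa [mul_left_comm] using hφ_decay.const_mul I⁻¹) hf hf_cont
  refine ((hpeak.comp tendsto_inv_nhdsGT_zero).const_mul I).congr' ?_
  filter_upwards [self_mem_nhdsWithin] with d (hd : 0 < d)
  have hcov := Measure.integral_comp_inv_smul_of_nonneg μ (fun x ↦ φ x * f (d • x)) hd.le
  simp only [smul_inv_smul₀ hd.ne', smul_eq_mul] at hcov
  simp only [Function.comp_apply, smul_eq_mul]
  rw [← integral_const_mul, ← inv_mul_cancel_left₀ (pow_pos hd (Module.finrank ℝ E)).ne'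
    (∫ x, φ x * f (d • x) ∂μ), ← hcov, ← integral_const_mul]
  congr with x
  generalize φ (d⁻¹ • x) = y
  rw [inv_pow]
  field_simp

lemma tendsto_integral_sq_mul_comp_smul_sub {g : ℝ → E → ℝ} {g₀ a p : E → ℝ} {M : ℝ}
    (hp : MemLp p 2 μ) (hp_le : ∀ x, |p x| ≤ M)
    (hp_decay : Tendsto (fun x ↦ ‖x‖ ^ Module.finrank ℝ E * p x ^ 2) (Bornology.cobounded E) (𝓝 0))
    (hg : ∀ d, AEStronglyMeasurable (g d) μ) (hg_le : ∀ d x, |g d x| ≤ p x)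
    (hg_lim : ∀ x, Tendsto (g · x) (𝓝[>] 0) (𝓝 (g₀ x)))
    (ha : MemLp a 2 μ) (ha_cont : ContinuousAt a 0) :
    Tendsto (fun d : ℝ ↦ ∫ x, (g d x * a (d • x) - g₀ x * a 0) ^ 2 ∂μ) (𝓝[>] 0) (𝓝 0) := by
  have hg₀_le (x : E) : |g₀ x| ≤ p x :=
    le_of_tendsto (hg_lim x).abs (.of_forall fun d ↦ hg_le d x)
  have hg₀ : AEStronglyMeasurable g₀ μ :=
    aestronglyMeasurable_of_tendsto_ae (𝓝[>] 0) hg (.of_forall hg_lim)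
  have ha_dilate (x : E) : Tendsto (fun d : ℝ ↦ a (d • x)) (𝓝[>] 0) (𝓝 (a 0)) := by
    have hsmul : Tendsto (fun d : ℝ ↦ d • x) (𝓝[>] 0) (𝓝 0) :=
      (Continuous.tendsto' (by fun_prop) 0 0 (zero_smul ℝ x)).mono_left nhdsWithin_le_nhds
    exact ha_cont.tendsto.comp hsmul
  have hsq_le (x : E) : ‖p x ^ 2‖ ≤ M ^ 2 := by
    rw [norm_pow]
    exact pow_le_pow_left₀ (norm_nonneg _) (hp_le x) 2
  have hint {d : ℝ} (hd : d ≠ 0) : Integrable (fun x ↦ p x ^ 2 * a (d • x) ^ 2) μ :=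
    (ha.integrable_sq.comp_smul hd).bdd_mul hp.integrable_sq.aestronglyMeasurable
      (.of_forall hsq_le)
  have hpeak := tendsto_integral_mul_comp_smul (fun x ↦ sq_nonneg (p x)) hp.integrable_sq hp_decay
    ha.integrable_sq (ha_cont.pow 2)
  refine tendsto_integral_zero_of_le_of_tendsto_integral
    (H := fun d x ↦ 2 * (p x ^ 2 * a (d • x) ^ 2 + p x ^ 2 * a 0 ^ 2))
    (H₀ := fun x ↦ 2 * (p x ^ 2 * a 0 ^ 2 + p x ^ 2 * a 0 ^ 2)) ?_ ?_ ?_ (fun d x ↦ sq_nonneg _)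
    (fun d x ↦ sq_mul_sub_mul_le (hg_le d x) (hg₀_le x)) (fun x ↦ ?_)
    (fun x ↦ ((((ha_dilate x).pow 2).const_mul _).add_const _).const_mul _) ?_
  · filter_upwards [self_mem_nhdsWithin] with d (hd : 0 < d)
    have ha_meas := ha.aestronglyMeasurable.comp_quasiMeasurePreserving
      (Measure.quasiMeasurePreserving_smul μ hd.ne')
    exact (((hg d).mul ha_meas).sub (hg₀.mul_const _)).pow 2
  · filter_upwards [self_mem_nhdsWithin] with d (hd : 0 < d)
    exact ((hint hd.ne').add (hp.integrable_sq.mul_const _)).const_mul 2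
  · exact ((hp.integrable_sq.mul_const _).add (hp.integrable_sq.mul_const _)).const_mul 2
  · simpa using (((hg_lim x).mul (ha_dilate x)).sub_const (g₀ x * a 0)).pow 2
  · have hconst : Integrable (fun x ↦ p x ^ 2 * a 0 ^ 2) μ := hp.integrable_sq.mul_const _
    rw [integral_const_mul, integral_add hconst hconst, integral_mul_const]
    refine ((hpeak.add_const _).const_mul 2).congr' ?_
    filter_upwards [self_mem_nhdsWithin] with d (hd : 0 < d)
    rw [integral_const_mul, integral_add (hint hd.ne') hconst, integral_mul_const]

lemma tendsto_integral_sq_mul_comp_smul_sub_of_le_rpow {g : ℝ → E → ℝ} {g₀ a : E → ℝ} {D α : ℝ}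
    (hα : Module.finrank ℝ E < 2 * α) (hg : ∀ d, AEStronglyMeasurable (g d) μ)
    (hg_le : ∀ d x, |g d x| ≤ D * (1 + ‖x‖) ^ (-α))
    (hg_lim : ∀ x, Tendsto (g · x) (𝓝[>] 0) (𝓝 (g₀ x)))
    (ha : MemLp a 2 μ) (ha_cont : ContinuousAt a 0) :
    Tendsto (fun d : ℝ ↦ ∫ x, (g d x * a (d • x) - g₀ x * a 0) ^ 2 ∂μ) (𝓝[>] 0) (𝓝 0) := by
  have hα_nonneg : 0 ≤ α := by linarith [(Module.finrank ℝ E).cast_nonneg (α := ℝ)]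
  have henv : Measurable fun x : E ↦ D * (1 + ‖x‖) ^ (-α) := by fun_prop
  refine tendsto_integral_sq_mul_comp_smul_sub (M := |D|)
    ((memLp_two_iff_integrable_sq henv.aestronglyMeasurable).2 ?_) (fun x ↦ ?_) ?_ hg hg_le hg_lim
    ha ha_cont
  · simp only [sq_mul_one_add_norm_rpow_neg]
    exact (integrable_one_add_norm hα).const_mul _
  · rw [abs_mul, abs_of_nonneg (by positivity : 0 ≤ (1 + ‖x‖) ^ (-α))]
    exact mul_le_of_le_one_right (abs_nonneg D) (one_add_norm_rpow_neg_le_one hα_nonneg x)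
  · simpa only [sq_mul_one_add_norm_rpow_neg, mul_left_comm, mul_zero] using
      (tendsto_norm_pow_mul_one_add_norm_rpow_neg hα).const_mul (D ^ 2)

end DilationLimits

section BesselMatern

/-- The Matérn function `x ↦ K_ν(|x|) |x|^ν`, of which the spectral density is a sum of two
translates. At `x = 0` it takes the junk value of `besselK ν 0 * 0 ^ ν`. -/
noncomputable def matern (ν x : ℝ) : ℝ := besselK ν |x| * |x| ^ ν

lemma besselK_nonneg (ν z : ℝ) : 0 ≤ besselK ν z := by
  refine mul_nonneg (by norm_num) (setIntegral_nonneg measurableSet_Ioi fun s (hs : 0 < s) ↦ ?_)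
  positivity

lemma matern_nonneg (ν x : ℝ) : 0 ≤ matern ν x :=
  mul_nonneg (besselK_nonneg _ _) (by positivity)

/-- The weight `v^(ν-1) exp(-v/2)` times the Gaussian of variance `v`, up to normalization, at
`x`: integrating over the variance `v` gives the Matérn function. -/
noncomputable def gaussianMixand (ν x v : ℝ) : ℝ :=
  v ^ (ν - 1) * exp (-(v / 2)) * exp (-(1 / (2 * v)) * x ^ 2)

@[fun_prop]
lemma measurable_gaussianMixand (ν : ℝ) :
    Measurable fun p : ℝ × ℝ ↦ gaussianMixand ν p.1 p.2 := by
  unfold gaussianMixand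
  fun_prop

lemma gaussianMixand_nonneg (ν x : ℝ) {v : ℝ} (hv : 0 < v) : 0 ≤ gaussianMixand ν x v := by
  unfold gaussianMixand
  positivity

lemma gaussianMixand_le_of_abs_le (ν : ℝ) {x y v : ℝ} (hv : 0 < v) (hxy : |x| ≤ |y|) :
    gaussianMixand ν y v ≤ gaussianMixand ν x v := by
  have hsq : x ^ 2 ≤ y ^ 2 := sq_le_sq.2 hxy
  unfold gaussianMixand
  simp only [neg_mul]
  gcongr

lemma matern_eq_integral_gaussianMixand (ν : ℝ) {x : ℝ} (hx : x ≠ 0) :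
    matern ν x = 1 / 2 * ∫ v in Set.Ioi 0, gaussianMixand ν x v := by
  have hx' : 0 < |x| := abs_pos.2 hx
  have hsubst (s : ℝ) (hs : 0 < s) : gaussianMixand ν x (|x| * s) =
      |x| ^ (ν - 1) * (s ^ (ν - 1) * exp (-(|x| / 2) * (s + 1 / s))) := by
    unfold gaussianMixand
    rw [Real.mul_rpow hx'.le hs.le, mul_assoc, ← Real.exp_add, mul_assoc, ← sq_abs x]
    congr 3
    field_simp
    ring
  -- The substitution `v = |x| s`.
  have hscale := integral_comp_mul_left_Ioi (gaussianMixand ν x) 0 hx'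
  rw [mul_zero, setIntegral_congr_fun measurableSet_Ioi hsubst, integral_const_mul,
    smul_eq_mul, eq_inv_mul_iff_mul_eq₀ hx'.ne', ← mul_assoc, Real.rpow_sub_one hx'.ne',
    mul_div_cancel₀ _ hx'.ne'] at hscale
  rw [← hscale, matern, besselK]
  ring

lemma integral_gaussianMixand (ν : ℝ) {v : ℝ} (hv : 0 < v) :
    ∫ x, gaussianMixand ν x v = √(2 * π) * (v ^ (ν + 1 / 2 - 1) * exp (-(v / 2))) := by
  unfold gaussianMixand
  have hstd : √(π / (1 / (2 * v))) = √(2 * π) * v ^ (1 / 2 : ℝ) := by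
    rw [← Real.sqrt_eq_rpow, ← Real.sqrt_mul (by positivity)]
    congr 1
    field_simp
  rw [integral_const_mul, integral_gaussian, hstd, add_sub_right_comm, Real.rpow_add hv]
  ring

lemma integrable_gaussianMixand {ν : ℝ} (hν : -1 / 2 < ν) :
    Integrable (fun p : ℝ × ℝ ↦ gaussianMixand ν p.1 p.2)
      (volume.prod (volume.restrict (Set.Ioi 0))) := by
  refine (integrable_prod_iff' (measurable_gaussianMixand ν).aestronglyMeasurable).2 ⟨?_, ?_⟩
  · filter_upwards [ae_restrict_mem measurableSet_Ioi] with v (hv : 0 < v)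
    exact (integrable_exp_neg_mul_sq (by positivity)).const_mul _
  have hweight := integrableOn_rpow_mul_exp_neg_mul_rpow (s := ν + 1 / 2 - 1) (by linarith) one_pos
    one_half_pos
  refine (hweight.const_mul √(2 * π)).congr ?_
  filter_upwards [ae_restrict_mem measurableSet_Ioi] with v (hv : 0 < v)
  simp only [Real.norm_of_nonneg (gaussianMixand_nonneg ν _ hv), integral_gaussianMixand ν hv,
    Real.rpow_one]
  ring_nf

lemma integrable_matern {ν : ℝ} (hν : -1 / 2 < ν) : Integrable (matern ν) := by
  refine ((integrable_gaussianMixand hν).integral_prod_left.const_mul (1 / 2)).congr ?_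
  filter_upwards [Measure.ae_ne volume 0] with x hx
  exact (matern_eq_integral_gaussianMixand ν hx).symm

lemma continuousAt_matern {ν x : ℝ} (hν : -1 / 2 < ν) (hx : x ≠ 0) :
    ContinuousAt (matern ν) x := by
  -- Almost every slice of a jointly integrable function is integrable; one at a point closer to
  -- the origin than `x` dominates all slices near `x`.
  obtain ⟨y, hy_int, hy⟩ :
      ∃ y, IntegrableOn (gaussianMixand ν y) (Set.Ioi 0) ∧ y ∈ Set.Ioo 0 |x| := by
    have hIoo : ∃ᵐ y, y ∈ Set.Ioo 0 |x| := frequently_ae_mem_iff.2 (by simpa using hx)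
    exact ((integrable_gaussianMixand hν).prod_right_ae.and_frequently hIoo).exists
  have hmatern : matern ν =ᶠ[𝓝 x] fun z ↦ 1 / 2 * ∫ v in Set.Ioi 0, gaussianMixand ν z v := by
    filter_upwards [isOpen_ne.mem_nhds hx] with z hz
    exact matern_eq_integral_gaussianMixand ν hz
  refine ContinuousAt.congr ?_ hmatern.symm
  refine continuousAt_const.mul (continuousAt_of_dominated (.of_forall fun z ↦ ?_) ?_ hy_int ?_)
  · exact (by fun_prop : Measurable (gaussianMixand ν z)).aestronglyMeasurable
  · filter_upwards [continuous_abs.continuousAt.eventually_const_lt hy.2] with z hz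
    filter_upwards [ae_restrict_mem measurableSet_Ioi] with v (hv : 0 < v)
    rw [Real.norm_of_nonneg (gaussianMixand_nonneg ν z hv)]
    exact gaussianMixand_le_of_abs_le ν hv ((abs_of_pos hy.1).trans_le hz.le)
  · refine .of_forall fun v ↦ ?_
    unfold gaussianMixand
    fun_prop

end BesselMatern

section SpectralDensity

lemma specDen_eq_matern (k w : ℝ) : specDen k w = fun x ↦
    c1 k / 2 * (matern ((k - 1) / 2) (x + w) + matern ((k - 1) / 2) (x - w)) :=
  rfl

lemma c1_nonneg {k : ℝ} (hk : 0 < k) : 0 ≤ c1 k := by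
  have : 0 < Real.Gamma (k / 2) := Real.Gamma_pos_of_pos (half_pos hk)
  unfold c1
  positivity

lemma specDen_nonneg {k : ℝ} (hk : 0 < k) (w x : ℝ) : 0 ≤ specDen k w x := by
  rw [specDen_eq_matern]
  exact mul_nonneg (div_nonneg (c1_nonneg hk) zero_le_two)
    (add_nonneg (matern_nonneg _ _) (matern_nonneg _ _))

lemma integrable_specDen {k : ℝ} (hk : 0 < k) (w : ℝ) : Integrable (specDen k w) := by
  have hmatern : Integrable (matern ((k - 1) / 2)) := integrable_matern (by linarith)
  rw [specDen_eq_matern]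
  exact ((hmatern.comp_add_right w).add (hmatern.comp_sub_right w)).const_mul _

lemma continuousAt_specDen {k w x : ℝ} (hk : 0 < k) (hx_neg : x ≠ -w) (hx : x ≠ w) :
    ContinuousAt (specDen k w) x := by
  have hν : -1 / 2 < (k - 1) / 2 := by linarith
  have hadd : ContinuousAt (fun y ↦ matern ((k - 1) / 2) (y + w)) x :=
    (continuousAt_matern hν (by rwa [ne_eq, add_eq_zero_iff_eq_neg])).comp
      (f := fun y ↦ y + w) (by fun_prop)
  have hsub : ContinuousAt (fun y ↦ matern ((k - 1) / 2) (y - w)) x :=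
    (continuousAt_matern hν (sub_ne_zero.2 hx)).comp (f := fun y ↦ y - w) (by fun_prop)
  rw [specDen_eq_matern]
  exact continuousAt_const.mul (hadd.add hsub)

lemma memLp_sqrt_specDen {k : ℝ} (hk : 0 < k) (w : ℝ) :
    MemLp (fun x ↦ √(specDen k w x)) 2 volume := by
  refine (memLp_two_iff_integrable_sq ?_).2 ?_
  · exact Real.continuous_sqrt.comp_aestronglyMeasurable (integrable_specDen hk w).1
  · simpa only [Real.sq_sqrt (specDen_nonneg hk w _)] using integrable_specDen hk w

end SpectralDensity

section MittagLeffler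

lemma rpow_mul_exp_neg_le_Gamma_add_one {A s : ℝ} (hA : 0 ≤ A) (hs : 0 ≤ s) :
    A ^ s * exp (-A) ≤ Real.Gamma (s + 1) := by
  have hint := Real.GammaIntegral_convergent (s := s + 1) (by linarith)
  rw [Real.Gamma_eq_integral (by linarith), ← integral_exp_neg_Ioi, ← integral_const_mul]
  calc ∫ x in Set.Ioi A, A ^ s * exp (-x)
      ≤ ∫ x in Set.Ioi A, exp (-x) * x ^ (s + 1 - 1) := by
        refine setIntegral_mono_on ((integrableOn_exp_neg_Ioi A).const_mul _)
          (hint.mono_set (Set.Ioi_subset_Ioi hA)) measurableSet_Ioi fun x (hx : A < x) ↦ ?_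
        rw [add_sub_cancel_right, mul_comm]
        gcongr
    _ ≤ ∫ x in Set.Ioi 0, exp (-x) * x ^ (s + 1 - 1) := by
        refine setIntegral_mono_set hint ?_ (Set.Ioi_subset_Ioi hA).eventuallyLE
        filter_upwards [ae_restrict_mem measurableSet_Ioi] with x (hx : 0 < x)
        simp only [Pi.zero_apply]
        positivity

lemma summable_pow_div_Gamma {b R : ℝ} (hb : 0 < b) (hR : 0 ≤ R) :
    Summable fun n : ℕ ↦ R ^ n / Real.Gamma (b * n + 1) := by
  -- `Γ(bn + 1) ≥ (A ^ b) ^ n exp(-A)`, and this choice makes `A ^ b = R + 1`.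
  let A : ℝ := (R + 1) ^ b⁻¹
  have hAb : A ^ b = R + 1 := Real.rpow_inv_rpow (by positivity) hb.ne'
  have hΓ (n : ℕ) : (R + 1) ^ n * exp (-A) ≤ Real.Gamma (b * n + 1) := by
    rw [← hAb, ← Real.rpow_mul_natCast (by positivity)]
    exact rpow_mul_exp_neg_le_Gamma_add_one (by positivity) (by positivity)
  have hgeom : Summable fun n : ℕ ↦ exp A * (R / (R + 1)) ^ n :=
    (summable_geometric_of_lt_one (by positivity)
      ((div_lt_one (by positivity)).2 (lt_add_one R))).mul_left _
  refine hgeom.of_nonneg_of_le (fun n ↦ div_nonneg (by positivity) ?_) fun n ↦ ?_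
  · exact (Real.Gamma_pos_of_pos (by positivity)).le
  · calc R ^ n / Real.Gamma (b * n + 1) ≤ R ^ n / ((R + 1) ^ n * exp (-A)) := by
          gcongr
          exact hΓ n
      _ = exp A * (R / (R + 1)) ^ n := by
          rw [Real.exp_neg, div_pow]
          field_simp

lemma continuous_mittagLeffler {b : ℝ} (hb : 0 < b) : Continuous (mittagLeffler b) := by
  have hΓ (n : ℕ) : 0 < Real.Gamma (b * n + 1) := Real.Gamma_pos_of_pos (by positivity)
  refine continuous_iff_continuousAt.2 fun z ↦ ?_
  have hball : ContinuousOn (mittagLeffler b) (Metric.closedBall 0 (|z| + 1)) := by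
    refine continuousOn_tsum (fun n ↦ by fun_prop)
      (summable_pow_div_Gamma hb (R := |z| + 1) (by positivity)) fun n x hx ↦ ?_
    rw [norm_div, norm_pow, Real.norm_of_nonneg (hΓ n).le]
    have := hΓ n
    gcongr
    exact mem_closedBall_zero_iff.1 hx
  exact hball.continuousAt (Metric.closedBall_mem_nhds_of_mem (by simp))

lemma abs_mittagLeffler_neg_le {b u : ℝ} (hu : 0 ≤ u) (hb_neg : -1 < b) (hb_lt : b < 1)
    (hlow : 1 / (1 + Real.Gamma (1 - b) * u) ≤ mittagLeffler b (-u))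
    (hupp : mittagLeffler b (-u) ≤ 1 / (1 + u / Real.Gamma (1 + b))) :
    |mittagLeffler b (-u)| ≤ max 1 (Real.Gamma (1 + b)) / (1 + u) := by
  have : 0 < Real.Gamma (1 - b) := Real.Gamma_pos_of_pos (by linarith)
  have hΓ : 0 < Real.Gamma (1 + b) := Real.Gamma_pos_of_pos (by linarith)
  rw [abs_of_nonneg (le_trans (by positivity) hlow)]
  refine hupp.trans ?_
  rw [div_le_div_iff₀ (by positivity) (by positivity), one_mul, mul_add, mul_one]
  gcongr
  · exact le_max_left _ _
  · rw [mul_div_left_comm]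
    exact le_mul_of_one_le_right hu ((one_le_div hΓ).2 (le_max_right _ _))

end MittagLeffler

section RieszBesselSymbol

lemma inv_one_add_mul_rpow_le {c α y : ℝ} (hc : 0 < c) (hα : 0 ≤ α) (hy : 0 ≤ y) :
    (1 + c * y ^ α)⁻¹ ≤ 2 ^ α / min 1 c * (1 + y) ^ (-α) := by
  have : 0 < min 1 c := lt_min one_pos hc
  have hmean : ((1 + y) / 2) ^ α ≤ 1 + y ^ α := by
    have hmax : (1 + y) / 2 ≤ max 1 y := by linarith [le_max_left 1 y, le_max_right 1 y]
    calc ((1 + y) / 2) ^ α ≤ max 1 y ^ α := by gcongr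
      _ = max 1 (y ^ α) := by
        rw [(Real.monotoneOn_rpow_Ici_of_exponent_nonneg hα).map_max
          (Set.mem_Ici.2 zero_le_one) (Set.mem_Ici.2 hy), Real.one_rpow]
      _ ≤ 1 + y ^ α := max_le_add_of_nonneg zero_le_one (by positivity)
  have hlower : min 1 c * ((1 + y) / 2) ^ α ≤ 1 + c * y ^ α :=
    calc min 1 c * ((1 + y) / 2) ^ α ≤ min 1 c * 1 + min 1 c * y ^ α := by
          rw [← mul_add]
          gcongr
      _ ≤ 1 + c * y ^ α := by
          rw [mul_one]
          gcongr
          · exact min_le_left _ _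
          · exact min_le_right _ _
  calc (1 + c * y ^ α)⁻¹ ≤ (min 1 c * ((1 + y) / 2) ^ α)⁻¹ := by gcongr
    _ = 2 ^ α / min 1 c * (1 + y) ^ (-α) := by
        rw [Real.div_rpow (by positivity) zero_le_two, Real.rpow_neg (by positivity)]
        field_simp

/-- The Fourier symbol `μ|x|^α (1 + δ²x²)^(γ/2)` of the fractional Riesz–Bessel operator rescaled
by `δ`; the rescaled solution at time `t` has Fourier multiplier `E_b(-symbol * t^b)`. -/
noncomputable def rieszBesselSymbol (α γ μ δ x : ℝ) : ℝ :=
  μ * |x| ^ α * (1 + x ^ 2 * δ ^ 2) ^ (γ / 2)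

lemma rieszBesselSymbol_zero (α γ μ x : ℝ) : rieszBesselSymbol α γ μ 0 x = μ * |x| ^ α := by
  simp [rieszBesselSymbol]

lemma mul_abs_rpow_le_rieszBesselSymbol {γ μ : ℝ} (hγ : 0 ≤ γ) (hμ : 0 ≤ μ) (α δ x : ℝ) :
    μ * |x| ^ α ≤ rieszBesselSymbol α γ μ δ x :=
  le_mul_of_one_le_right (by positivity)
    (Real.one_le_rpow (le_add_of_nonneg_right (by positivity)) (by positivity))

lemma continuous_rieszBesselSymbol {α : ℝ} (hα : 0 ≤ α) (γ μ : ℝ) :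
    Continuous fun p : ℝ × ℝ ↦ rieszBesselSymbol α γ μ p.1 p.2 := by
  have habs : Continuous fun p : ℝ × ℝ ↦ |p.2| ^ α :=
    (by fun_prop : Continuous fun p : ℝ × ℝ ↦ |p.2|).rpow_const fun _ ↦ .inr hα
  have hbessel : Continuous fun p : ℝ × ℝ ↦ (1 + p.2 ^ 2 * p.1 ^ 2) ^ (γ / 2) :=
    (by fun_prop : Continuous fun p : ℝ × ℝ ↦ 1 + p.2 ^ 2 * p.1 ^ 2).rpow_const
      fun p ↦ .inl (by positivity)
  exact (habs.const_mul μ).mul hbessel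

lemma exists_abs_comp_neg_rieszBesselSymbol_le {f : ℝ → ℝ} {α γ μ τ C : ℝ} (hα : 0 ≤ α)
    (hγ : 0 ≤ γ) (hμ : 0 < μ) (hτ : 0 < τ) (hf : ∀ u, 0 ≤ u → |f (-u)| ≤ C / (1 + u)) :
    ∃ D, ∀ δ x, |f (-(rieszBesselSymbol α γ μ δ x * τ))| ≤ D * (1 + |x|) ^ (-α) := by
  refine ⟨C * (2 ^ α / min 1 (μ * τ)), fun δ x ↦ ?_⟩
  have hC : 0 ≤ C := by simpa using (abs_nonneg _).trans (hf 0 le_rfl)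
  have hsymbol : μ * τ * |x| ^ α ≤ rieszBesselSymbol α γ μ δ x * τ := by
    rw [mul_right_comm]
    gcongr
    exact mul_abs_rpow_le_rieszBesselSymbol hγ hμ.le α δ x
  have hsymbol_nonneg : 0 ≤ μ * τ * |x| ^ α := by positivity
  calc |f (-(rieszBesselSymbol α γ μ δ x * τ))|
      ≤ C / (1 + rieszBesselSymbol α γ μ δ x * τ) := hf _ (hsymbol_nonneg.trans hsymbol)
    _ ≤ C * (1 + μ * τ * |x| ^ α)⁻¹ := by
        rw [div_eq_mul_inv]
        gcongr
    _ ≤ C * (2 ^ α / min 1 (μ * τ) * (1 + |x|) ^ (-α)) := by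
        gcongr
        exact inv_one_add_mul_rpow_le (mul_pos hμ hτ) hα (abs_nonneg x)
    _ = C * (2 ^ α / min 1 (μ * τ)) * (1 + |x|) ^ (-α) := (mul_assoc _ _ _).symm

end RieszBesselSymbol

lemma tendsto_rpow_nhdsGT_zero {p : ℝ} (hp : 0 < p) :
    Tendsto (fun x : ℝ ↦ x ^ p) (𝓝[>] 0) (𝓝[>] 0) := by
  refine tendsto_nhdsWithin_iff.2 ⟨?_, ?_⟩
  · exact ((Real.continuous_rpow_const hp.le).tendsto' 0 0 (Real.zero_rpow hp.ne')).mono_left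
      nhdsWithin_le_nhds
  · filter_upwards [self_mem_nhdsWithin] with x hx using Real.rpow_pos_of_pos hx p

theorem frbe_mean_square_convergence_general {k w b α γ μ t C : ℝ} (hk : 0 < k) (hw : w ≠ 0)
    (hb : 0 < b) (hα : 1 / 2 < α) (hγ : 0 ≤ γ) (hμ : 0 < μ) (ht : 0 < t)
    (hE : ∀ u, 0 ≤ u → |mittagLeffler b (-u)| ≤ C / (1 + u)) :
    Tendsto (fun ε : ℝ ↦ ∫ x : ℝ,
      (mittagLeffler b (-(μ * |x| ^ α * (1 + x ^ 2 * ε ^ (2 * b / α)) ^ (γ / 2) * t ^ b))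
          * √(specDen k w (x * ε ^ (b / α)))
        - mittagLeffler b (-(μ * t ^ b * |x| ^ α)) * √(specDen k w 0)) ^ 2) (𝓝[>] 0) (𝓝 0) := by
  have hα_pos : 0 < α := by linarith
  let g : ℝ → ℝ → ℝ := fun δ x ↦ mittagLeffler b (-(rieszBesselSymbol α γ μ δ x * t ^ b))
  have hg : Continuous fun p : ℝ × ℝ ↦ g p.1 p.2 := (continuous_mittagLeffler hb).comp
    ((continuous_rieszBesselSymbol hα_pos.le γ μ).mul_const _).neg
  obtain ⟨D, hD⟩ := exists_abs_comp_neg_rieszBesselSymbol_le (α := α) (τ := t ^ b) hα_pos.le hγ hμ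
    (by positivity) hE
  have hg_zero : g 0 = fun x ↦ mittagLeffler b (-(μ * t ^ b * |x| ^ α)) := by
    ext x
    simp only [g, rieszBesselSymbol_zero, mul_right_comm]
  have hdilate := tendsto_integral_sq_mul_comp_smul_sub_of_le_rpow (μ := volume) (g := g)
    (g₀ := g 0)
    (by rw [Module.finrank_self, Nat.cast_one]; linarith)
    (fun δ ↦ (by fun_prop : Continuous (g δ)).aestronglyMeasurable) hD
    (fun x ↦ ((by fun_prop : Continuous (g · x)).tendsto 0).mono_left nhdsWithin_le_nhds)
    (memLp_sqrt_specDen hk w) (continuousAt_specDen hk (by simpa using hw) hw.symm).sqrt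
  rw [hg_zero] at hdilate
  refine (hdilate.comp (tendsto_rpow_nhdsGT_zero (div_pos hb hα_pos))).congr' ?_
  filter_upwards [self_mem_nhdsWithin] with ε (hε : 0 < ε)
  have hsq : (ε ^ (b / α)) ^ 2 = ε ^ (2 * b / α) := by
    rw [← Real.rpow_mul_natCast hε.le]
    ring_nf
  simp only [Function.comp_apply, smul_eq_mul, g, rieszBesselSymbol, hsq,
    mul_comm (ε ^ (b / α))]

theorem frbe_mean_square_convergence (k w b α γ μ t : ℝ)
    (hk0 : 0 < k) (hk1 : k < 1) (hw : w ≠ 0)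
    (hb0 : 0 < b) (hb1 : b < 1) (hα : 1 < α) (hγ : 0 ≤ γ) (hμ : 0 < μ) (ht : 0 < t)
    (hlow : ∀ u : ℝ, 0 ≤ u → 1 / (1 + Real.Gamma (1-b) * u) ≤ mittagLeffler b (-u))
    (hupp : ∀ u : ℝ, 0 ≤ u → mittagLeffler b (-u) ≤ 1 / (1 + u / Real.Gamma (1+b)))
    (hmono : ∀ u v : ℝ, 0 ≤ u → u ≤ v → mittagLeffler b (-v) ≤ mittagLeffler b (-u))
    : Filter.Tendsto
      (fun ε : ℝ => ∫ lam : ℝ,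
        (mittagLeffler b (-(μ * |lam| ^ α * (1 + lam^2 * ε ^ (2*b/α)) ^ (γ/2) * t ^ b))
            * Real.sqrt (specDen k w (lam * ε ^ (b/α)))
          - mittagLeffler b (-(μ * t ^ b * |lam| ^ α)) * Real.sqrt (specDen k w 0))^2)
      (nhdsWithin 0 (Set.Ioi 0)) (nhds 0) := by
  exact frbe_mean_square_convergence_general hk0 hw hb0 (by linarith) hγ hμ ht fun u hu ↦
    abs_mittagLeffler_neg_le hu (by linarith) hb1 (hlow u hu) (hupp u hu)
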